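/- For every solution of the backward Ricci flow system of class U3I0 (case (i)) with λ₂ > λ₃, setting k = λ₁(λ₂−λ₃)/(2√(λ₂λ₃)), one has A'(t) = −4(k² + A(t)²)/A(t)² on [0,T), and hence A(t) − k·arctan(A(t)/k) = λ₁ − k·arctan(λ₁/k) − 4t for all t ∈ [0,T). -/

import Mathlib

open Real Set ENNReal

/-- The time domain `[0, T)` where `T ∈ (0, ∞]` is an extended nonnegative real. -/
def flowDomain (T : ℝ≥0∞) : Set ℝ := {t : ℝ | 0 ≤ t ∧ ENNReal.ofReal t < T}

/-! In the logarithmic derivatives of `B - C` and `B * C` the contributions of `D` are `-D / (B C)`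
and `-2 D / (B C)`, so `D` cancels in `(B - C)² / (B C)`. What remains is
`2 (B + C)² / (A B C) = -2 A' / A`, hence `I = A² (B - C)² / (B C)` is a first integral, with value
`4 k²`. The equation for `A` reads `A' = -4 - (B - C)² / (B C) = -4 - I / A²`, so `A` satisfies an
autonomous equation, which separates: `x - k arctan (x / k)` is an antiderivative of
`x² / (k² + x²)`. -/

lemma convex_flowDomain (T : ℝ≥0∞) : Convex ℝ (flowDomain T) :=
  (ordConnected_Ici.inter ordConnected_Iio.preimage_ennreal_ofReal).convex

lemma zero_mem_flowDomain {T : ℝ≥0∞} (hT : 0 < T) : (0 : ℝ) ∈ flowDomain T :=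
  ⟨le_rfl, by rwa [ENNReal.ofReal_zero]⟩

lemma sub_eq_smul_of_hasDerivWithinAt_const {𝕜 E : Type*} [RCLike 𝕜] [NormedAddCommGroup E]
    [NormedSpace 𝕜 E] {S : Set 𝕜} (hS : Convex ℝ S) {f : 𝕜 → E} {c : E}
    (hf : ∀ x ∈ S, HasDerivWithinAt f c S x) {x y : 𝕜} (hx : x ∈ S) (hy : y ∈ S) :
    f y - f x = (y - x) • c := by
  have hg : ∀ z ∈ S, HasDerivWithinAt (f - fun z ↦ z • c) 0 S z := fun z hz ↦ by
    simpa using (hf z hz).sub ((hasDerivWithinAt_id z S).smul_const c)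
  have hconst := hS.norm_image_sub_le_of_norm_hasDerivWithin_le hg
    (fun _ _ ↦ norm_zero.le) hx hy
  rw [zero_mul, norm_le_zero_iff, Pi.sub_apply, Pi.sub_apply] at hconst
  rw [sub_smul, ← sub_eq_zero, ← hconst]
  abel

lemma hasDerivAt_sub_mul_arctan_div {k : ℝ} (hk : k ≠ 0) (x : ℝ) :
    HasDerivAt (fun x ↦ x - k * arctan (x / k)) (x ^ 2 / (k ^ 2 + x ^ 2)) x := by
  refine ((hasDerivAt_id x).sub
    (((hasDerivAt_id x).div_const k).arctan.const_mul k)).congr_deriv ?_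
  have : k ^ 2 + x ^ 2 ≠ 0 := by positivity
  simp only [id_eq]
  field_simp
  ring

lemma sub_mul_arctan_div_eq_of_hasDerivWithinAt {S : Set ℝ} (hS : Convex ℝ S) {f : ℝ → ℝ}
    {c k : ℝ} (hk : k ≠ 0) (hf₀ : ∀ t ∈ S, f t ≠ 0)
    (hf : ∀ t ∈ S, HasDerivWithinAt f (c * (k ^ 2 + f t ^ 2) / f t ^ 2) S t)
    {t₀ t : ℝ} (ht₀ : t₀ ∈ S) (ht : t ∈ S) :
    f t - k * arctan (f t / k) = f t₀ - k * arctan (f t₀ / k) + c * (t - t₀) := by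
  have hderiv : ∀ s ∈ S, HasDerivWithinAt (fun s ↦ f s - k * arctan (f s / k)) c S s := by
    intro s hs
    refine ((hasDerivAt_sub_mul_arctan_div hk (f s)).comp_hasDerivWithinAt s
      (hf s hs)).congr_deriv ?_
    have hf₀s := hf₀ s hs
    have : k ^ 2 + f s ^ 2 ≠ 0 := by positivity
    field_simp
  have hint := sub_eq_smul_of_hasDerivWithinAt_const hS hderiv ht₀ ht
  rw [smul_eq_mul] at hint
  linarith

lemma four_mul_sq_mul_sub_div_two_mul_sqrt (a : ℝ) {b c : ℝ} (hbc : 0 < b * c) :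
    4 * (a * (b - c) / (2 * √(b * c))) ^ 2 = a ^ 2 * (b - c) ^ 2 / (b * c) := by
  rw [div_pow, mul_pow, mul_pow, sq_sqrt hbc.le]
  ring

/-- The equations for `A`, `B`, `C` of the backward Ricci flow of class `U3I0`, case (i), on a time
set `S`, with `D` an arbitrary coefficient function. Nonvanishing of `A`, `B`, `C` is part of the
notion, so that the quotients are genuine. -/
structure IsU3I0FlowOn (A B C D : ℝ → ℝ) (S : Set ℝ) : Prop where
  A_ne_zero : ∀ t ∈ S, A t ≠ 0
  B_ne_zero : ∀ t ∈ S, B t ≠ 0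
  C_ne_zero : ∀ t ∈ S, C t ≠ 0
  hasDerivWithinAt_A : ∀ t ∈ S, HasDerivWithinAt A (-(B t / C t) - C t / B t - 2) S t
  hasDerivWithinAt_B : ∀ t ∈ S,
    HasDerivWithinAt B (-(C t / A t) - D t / C t + B t ^ 2 / (A t * C t)) S t
  hasDerivWithinAt_C : ∀ t ∈ S,
    HasDerivWithinAt C (-(B t / A t) - D t / B t + C t ^ 2 / (A t * B t)) S t

namespace IsU3I0FlowOn

/-- The quantity `A² (B - C)² / (B C)`, a first integral of the flow that makes the equation for `A`
autonomous. -/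
noncomputable def firstIntegral (A B C : ℝ → ℝ) (t : ℝ) : ℝ :=
  A t ^ 2 * (B t - C t) ^ 2 / (B t * C t)

variable {A B C D : ℝ → ℝ} {S : Set ℝ} {t : ℝ}

lemma hasDerivWithinAt_sub (h : IsU3I0FlowOn A B C D S) (ht : t ∈ S) :
    HasDerivWithinAt (fun s ↦ B s - C s)
      ((B t - C t) * ((B t + C t) ^ 2 / (A t * B t * C t) - D t / (B t * C t))) S t := by
  have hA := h.A_ne_zero t ht
  have hB := h.B_ne_zero t ht
  have hC := h.C_ne_zero t ht
  refine ((h.hasDerivWithinAt_B t ht).sub (h.hasDerivWithinAt_C t ht)).congr_deriv ?_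
  field_simp
  ring

lemma hasDerivWithinAt_mul (h : IsU3I0FlowOn A B C D S) (ht : t ∈ S) :
    HasDerivWithinAt (fun s ↦ B s * C s) (-2 * D t) S t := by
  have hA := h.A_ne_zero t ht
  have hB := h.B_ne_zero t ht
  have hC := h.C_ne_zero t ht
  refine ((h.hasDerivWithinAt_B t ht).mul (h.hasDerivWithinAt_C t ht)).congr_deriv ?_
  field_simp
  ring

lemma hasDerivWithinAt_firstIntegral (h : IsU3I0FlowOn A B C D S) (ht : t ∈ S) :
    HasDerivWithinAt (firstIntegral A B C) 0 S t := by
  have hA := h.A_ne_zero t ht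
  have hB := h.B_ne_zero t ht
  have hC := h.C_ne_zero t ht
  refine ((((h.hasDerivWithinAt_A t ht).pow 2).mul ((h.hasDerivWithinAt_sub ht).pow 2)).div
    (h.hasDerivWithinAt_mul ht) (mul_ne_zero hB hC)).congr_deriv ?_
  simp only [Pi.mul_apply, Pi.pow_apply]
  field_simp
  ring

lemma firstIntegral_eq (h : IsU3I0FlowOn A B C D S) (hS : Convex ℝ S) {t₀ : ℝ} (ht₀ : t₀ ∈ S)
    (ht : t ∈ S) : firstIntegral A B C t = firstIntegral A B C t₀ := by
  simpa [sub_eq_zero] using sub_eq_smul_of_hasDerivWithinAt_const hS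
    (fun _ ↦ h.hasDerivWithinAt_firstIntegral) ht₀ ht

lemma hasDerivWithinAt_A_of_firstIntegral_eq (h : IsU3I0FlowOn A B C D S) (ht : t ∈ S) {k : ℝ}
    (hk : firstIntegral A B C t = 4 * k ^ 2) :
    HasDerivWithinAt A (-4 * (k ^ 2 + A t ^ 2) / A t ^ 2) S t := by
  have hA := h.A_ne_zero t ht
  have hB := h.B_ne_zero t ht
  have hC := h.C_ne_zero t ht
  refine (h.hasDerivWithinAt_A t ht).congr_deriv ?_
  calc -(B t / C t) - C t / B t - 2
      = -4 - firstIntegral A B C t / A t ^ 2 := by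
        rw [firstIntegral]
        field_simp
        ring
    _ = -4 * (k ^ 2 + A t ^ 2) / A t ^ 2 := by
        rw [hk]
        field_simp
        ring

end IsU3I0FlowOn

theorem stmt9_general {A B C D : ℝ → ℝ} {S : Set ℝ} (h : IsU3I0FlowOn A B C D S)
    (hS : Convex ℝ S) {t₀ : ℝ} (ht₀ : t₀ ∈ S) (hBC : 0 < B t₀ * C t₀) (hne : B t₀ ≠ C t₀) {k : ℝ}
    (hk : k = A t₀ * (B t₀ - C t₀) / (2 * √(B t₀ * C t₀))) :
    ∀ t ∈ S,
      HasDerivWithinAt A (-4 * (k ^ 2 + A t ^ 2) / A t ^ 2) S t ∧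
      A t - k * arctan (A t / k) = A t₀ - k * arctan (A t₀ / k) - 4 * (t - t₀) := by
  have hk₀ : k ≠ 0 := hk ▸ div_ne_zero (mul_ne_zero (h.A_ne_zero t₀ ht₀) (sub_ne_zero.2 hne))
    (mul_pos two_pos (sqrt_pos.2 hBC)).ne'
  have hI : ∀ t ∈ S, IsU3I0FlowOn.firstIntegral A B C t = 4 * k ^ 2 := fun t ht ↦ by
    rw [h.firstIntegral_eq hS ht₀ ht, hk, four_mul_sq_mul_sub_div_two_mul_sqrt _ hBC,
      IsU3I0FlowOn.firstIntegral]
  have hA' : ∀ t ∈ S, HasDerivWithinAt A (-4 * (k ^ 2 + A t ^ 2) / A t ^ 2) S t :=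
    fun t ht ↦ h.hasDerivWithinAt_A_of_firstIntegral_eq ht (hI t ht)
  refine fun t ht ↦ ⟨hA' t ht, ?_⟩
  rw [sub_mul_arctan_div_eq_of_hasDerivWithinAt hS hk₀ h.A_ne_zero hA' ht₀ ht, neg_mul,
    sub_eq_add_neg _ (4 * (t - t₀))]

/-- For every solution of the backward Ricci flow system of class `U3I0`, case (i), with
`λ₂ > λ₃`, setting `k = λ₁(λ₂−λ₃)/(2√(λ₂λ₃))`, one has `A' = −4(k² + A²)/A²` on `[0,T)`,
and hence `A(t) − k·arctan(A(t)/k) = λ₁ − k·arctan(λ₁/k) − 4t` for all `t ∈ [0,T)`. -/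
theorem stmt9 (T : ℝ≥0∞) (hT : 0 < T)
    (lam1 lam2 lam3 lam4 : ℝ)
    (hlam1 : 0 < lam1) (hlam2 : 0 < lam2) (hlam3 : 0 < lam3) (hlam4 : 0 < lam4)
    (hlt : lam3 < lam2)
    (A B C D : ℝ → ℝ)
    (hpos : ∀ t ∈ flowDomain T, 0 < A t ∧ 0 < B t ∧ 0 < C t ∧ 0 < D t)
    (hA : ∀ t ∈ flowDomain T,
      HasDerivWithinAt A (-(B t / C t) - C t / B t - 2) (flowDomain T) t)
    (hB : ∀ t ∈ flowDomain T,
      HasDerivWithinAt B (-(C t / A t) - D t / C t + B t ^ 2 / (A t * C t)) (flowDomain T) t)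
    (hC : ∀ t ∈ flowDomain T,
      HasDerivWithinAt C (-(B t / A t) - D t / B t + C t ^ 2 / (A t * B t)) (flowDomain T) t)
    (hD : ∀ t ∈ flowDomain T,
      HasDerivWithinAt D (D t ^ 2 / (B t * C t)) (flowDomain T) t)
    (hA0 : A 0 = lam1) (hB0 : B 0 = lam2) (hC0 : C 0 = lam3) (hD0 : D 0 = lam4)
    (k : ℝ) (hk : k = lam1 * (lam2 - lam3) / (2 * Real.sqrt (lam2 * lam3))) :
    ∀ t ∈ flowDomain T,
      HasDerivWithinAt A (-4 * (k ^ 2 + A t ^ 2) / A t ^ 2) (flowDomain T) t ∧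
      A t - k * Real.arctan (A t / k) = lam1 - k * Real.arctan (lam1 / k) - 4 * t := by
  subst hA0 hB0 hC0
  have h : IsU3I0FlowOn A B C D (flowDomain T) :=
    ⟨fun t ht ↦ (hpos t ht).1.ne', fun t ht ↦ (hpos t ht).2.1.ne',
      fun t ht ↦ (hpos t ht).2.2.1.ne', hA, hB, hC⟩
  simpa only [sub_zero] using stmt9_general h (convex_flowDomain T) (zero_mem_flowDomain hT)
    (mul_pos hlam2 hlam3) hlt.ne' hk
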